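/- Let v : ℝ → ℝ → ℝ be a smooth function of (x,t) with v(x,t) > 0 and v_x(x,t) > 0 for all (x,t), satisfying the 3rd potential Kupershmidt equation v_t = v_{5x} - 5·v_{xx}v_{4x}/v_x + 5·v_{xx}²v_{xxx}/v_x². Then both U := (1/2)·ln 2 - ln(v_x) and Ū := (1/2)·ln 2 - ln(v_x) + 2·ln(v) satisfy the 1st potential Kupershmidt equation: U_t = U_{5x} - 5U_{xx}U_{xxx} - 5U_x²U_{xxx} - 5U_xU_{xx}² + U_x⁵, and likewise with U replaced by Ū. -/

import Mathlib

/-!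
Write `S = -U_xx - U_x²/2` and `F = S_xx + 4 S²`. Expanding derivatives shows that the 1st potential
Kupershmidt equation is `U_t = -F_x + U_x F` (`kup1_of_schwarz`). For `U = c - ln v_x` one has
`U_x = -v_xx / v_x`, so `S` is the Schwarzian derivative of `v` in `x`, and the 3rd potential
Kupershmidt equation is the Möbius invariant equation `v_t = v_x F` (`kup3_schwarz`).
Differentiating the latter in `x` and exchanging the derivatives gives `U_t = -F_x + U_x F`.

The function `Ū = U + 2 ln v` is the `U` belonging to the Möbius transform `-1/v`; it has
the same `S`, hence the same `F`, while `Ū_t = U_t + 2 v_t / v = -F_x + Ū_x F`.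
-/

/-- Total `x`-derivative of a function of `(x, t)`. -/
noncomputable def dx (f : ℝ → ℝ → ℝ) : ℝ → ℝ → ℝ := fun x t => deriv (fun y => f y t) x

/-- Total `t`-derivative of a function of `(x, t)`. -/
noncomputable def dt (f : ℝ → ℝ → ℝ) : ℝ → ℝ → ℝ := fun x t => deriv (fun s => f x s) t

/-- The 1st potential Kupershmidt equation. -/
def Kup1 (U : ℝ → ℝ → ℝ) : Prop :=
  ∀ x t, dt U x t =
    dx (dx (dx (dx (dx U)))) x t
    - 5 * dx (dx U) x t * dx (dx (dx U)) x t
    - 5 * (dx U x t)^2 * dx (dx (dx U)) x t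
    - 5 * dx U x t * (dx (dx U) x t)^2
    + (dx U x t)^5

/-- The 3rd potential Kupershmidt equation. -/
def Kup3 (v : ℝ → ℝ → ℝ) : Prop :=
  ∀ x t, dt v x t =
    dx (dx (dx (dx (dx v)))) x t
    - 5 * dx (dx v) x t * dx (dx (dx (dx v))) x t / dx v x t
    + 5 * (dx (dx v) x t)^2 * dx (dx (dx v)) x t / (dx v x t)^2

/-- Joint smoothness in `(x, t)`. -/
def Smooth2 (f : ℝ → ℝ → ℝ) : Prop := ContDiff ℝ (⊤ : ℕ∞) (fun p : ℝ × ℝ => f p.1 p.2)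

namespace Smooth2

variable {f : ℝ → ℝ → ℝ}

lemma hasDerivAt_fderiv_x (hf : Smooth2 f) (x t : ℝ) :
    HasDerivAt (fun y => f y t) (fderiv ℝ (fun p : ℝ × ℝ => f p.1 p.2) (x, t) (1, 0)) x := by
  have h : HasFDerivAt (fun p : ℝ × ℝ => f p.1 p.2) _ (x, t) :=
    (ContDiff.differentiable hf (by simp) (x, t)).hasFDerivAt
  exact h.comp_hasDerivAt (f := fun y : ℝ => (y, t)) x
    ((hasDerivAt_id x).prodMk (hasDerivAt_const x t))

lemma hasDerivAt_fderiv_t (hf : Smooth2 f) (x t : ℝ) :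
    HasDerivAt (fun s => f x s) (fderiv ℝ (fun p : ℝ × ℝ => f p.1 p.2) (x, t) (0, 1)) t := by
  have h : HasFDerivAt (fun p : ℝ × ℝ => f p.1 p.2) _ (x, t) :=
    (ContDiff.differentiable hf (by simp) (x, t)).hasFDerivAt
  exact h.comp_hasDerivAt (f := fun s : ℝ => (x, s)) t
    ((hasDerivAt_const t x).prodMk (hasDerivAt_id t))

lemma dx_eq (hf : Smooth2 f) (x t : ℝ) :
    dx f x t = fderiv ℝ (fun p : ℝ × ℝ => f p.1 p.2) (x, t) (1, 0) :=
  (hf.hasDerivAt_fderiv_x x t).deriv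

lemma dt_eq (hf : Smooth2 f) (x t : ℝ) :
    dt f x t = fderiv ℝ (fun p : ℝ × ℝ => f p.1 p.2) (x, t) (0, 1) :=
  (hf.hasDerivAt_fderiv_t x t).deriv

lemma hx (hf : Smooth2 f) (x t : ℝ) : HasDerivAt (fun y => f y t) (dx f x t) x := by
  rw [hf.dx_eq]; exact hf.hasDerivAt_fderiv_x x t

lemma ht (hf : Smooth2 f) (x t : ℝ) : HasDerivAt (fun s => f x s) (dt f x t) t := by
  rw [hf.dt_eq]; exact hf.hasDerivAt_fderiv_t x t

lemma contDiff_fderiv (hf : Smooth2 f) :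
    ContDiff ℝ (⊤ : ℕ∞) (fderiv ℝ (fun p : ℝ × ℝ => f p.1 p.2)) :=
  ContDiff.fderiv_right (n := ((⊤ : ℕ∞) : WithTop ℕ∞)) hf (by simp)

lemma dx (hf : Smooth2 f) : Smooth2 (dx f) := by
  have h : (fun p : ℝ × ℝ => _root_.dx f p.1 p.2) =
      fun p => fderiv ℝ (fun p : ℝ × ℝ => f p.1 p.2) p (1, 0) := by
    funext p; exact hf.dx_eq p.1 p.2
  unfold Smooth2
  rw [h]
  exact hf.contDiff_fderiv.clm_apply contDiff_const

lemma dt (hf : Smooth2 f) : Smooth2 (dt f) := by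
  have h : (fun p : ℝ × ℝ => _root_.dt f p.1 p.2) =
      fun p => fderiv ℝ (fun p : ℝ × ℝ => f p.1 p.2) p (0, 1) := by
    funext p; exact hf.dt_eq p.1 p.2
  unfold Smooth2
  rw [h]
  exact hf.contDiff_fderiv.clm_apply contDiff_const

/-- Symmetry of the mixed second derivative. -/
lemma dt_dx (hf : Smooth2 f) (x t : ℝ) :
    _root_.dt (_root_.dx f) x t = _root_.dx (_root_.dt f) x t := by
  have hd := (hf.contDiff_fderiv.differentiable (by simp) (x, t)).hasFDerivAt
  have e1 : (fun p : ℝ × ℝ => _root_.dx f p.1 p.2) =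
      fun p => fderiv ℝ (fun p : ℝ × ℝ => f p.1 p.2) p (1, 0) := by
    funext p; exact hf.dx_eq p.1 p.2
  have e2 : (fun p : ℝ × ℝ => _root_.dt f p.1 p.2) =
      fun p => fderiv ℝ (fun p : ℝ × ℝ => f p.1 p.2) p (0, 1) := by
    funext p; exact hf.dt_eq p.1 p.2
  rw [hf.dx.dt_eq, hf.dt.dx_eq, e1, e2,
    (hd.clm_apply (hasFDerivAt_const ((1 : ℝ), (0 : ℝ)) (x, t))).fderiv,
    (hd.clm_apply (hasFDerivAt_const ((0 : ℝ), (1 : ℝ)) (x, t))).fderiv]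
  have hs : IsSymmSndFDerivAt ℝ (fun p : ℝ × ℝ => f p.1 p.2) (x, t) :=
    ContDiffAt.isSymmSndFDerivAt (n := ((⊤ : ℕ∞) : WithTop ℕ∞))
      (ContDiff.contDiffAt hf)
      (by
        rw [minSmoothness_of_isRCLikeNormedField]
        exact WithTop.coe_le_coe.mpr (le_top : (2 : ℕ∞) ≤ ⊤))
  simpa using hs.eq (0, 1) (1, 0)

end Smooth2

/-- `S = -U_xx - U_x²/2`; for `U = c - ln v_x` this is the Schwarzian derivative of `v` in `x`. -/
noncomputable def schwarz (U : ℝ → ℝ → ℝ) : ℝ → ℝ → ℝ :=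
  fun x t => -dx (dx U) x t - (dx U x t) ^ 2 / 2

/-- The differential polynomial `F = S_xx + 4 S²` in the Schwarzian `S`. -/
noncomputable def schwarzFlow (S : ℝ → ℝ → ℝ) : ℝ → ℝ → ℝ :=
  fun x t => dx (dx S) x t + 4 * (S x t) ^ 2

lemma smooth2_schwarz {U : ℝ → ℝ → ℝ} (hU : Smooth2 U) : Smooth2 (schwarz U) := by
  have h1 := hU.dx
  have h2 := hU.dx.dx
  unfold Smooth2 schwarz at *
  exact h2.neg.sub ((h1.pow 2).div_const 2)

lemma smooth2_schwarzFlow {S : ℝ → ℝ → ℝ} (hS : Smooth2 S) : Smooth2 (schwarzFlow S) := by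
  have h2 := hS.dx.dx
  unfold Smooth2 schwarzFlow at *
  exact h2.add (contDiff_const.mul (hS.pow 2))

lemma dx_schwarz {U : ℝ → ℝ → ℝ} (hU : Smooth2 U) :
    dx (schwarz U) = fun x t => -dx (dx (dx U)) x t - dx U x t * dx (dx U) x t := by
  funext x t
  refine HasDerivAt.deriv (((hU.dx.dx.hx x t).neg.sub
    (((hU.dx.hx x t).pow 2).div_const 2)).congr_deriv ?_)
  simp; ring

lemma dx_dx_schwarz {U : ℝ → ℝ → ℝ} (hU : Smooth2 U) :
    dx (dx (schwarz U)) = fun x t => -dx (dx (dx (dx U))) x t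
      - (dx (dx U) x t) ^ 2 - dx U x t * dx (dx (dx U)) x t := by
  rw [dx_schwarz hU]
  funext x t
  refine HasDerivAt.deriv (((hU.dx.dx.dx.hx x t).neg.sub
    ((hU.dx.hx x t).mul (hU.dx.dx.hx x t))).congr_deriv ?_)
  ring

lemma dx_dx_dx_schwarz {U : ℝ → ℝ → ℝ} (hU : Smooth2 U) :
    dx (dx (dx (schwarz U))) = fun x t => -dx (dx (dx (dx (dx U)))) x t
      - 3 * dx (dx U) x t * dx (dx (dx U)) x t - dx U x t * dx (dx (dx (dx U))) x t := by
  rw [dx_dx_schwarz hU]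
  funext x t
  refine HasDerivAt.deriv ((((hU.dx.dx.dx.dx.hx x t).neg.sub ((hU.dx.dx.hx x t).pow 2)).sub
    ((hU.dx.hx x t).mul (hU.dx.dx.dx.hx x t))).congr_deriv ?_)
  simp; ring

lemma dx_schwarzFlow {S : ℝ → ℝ → ℝ} (hS : Smooth2 S) (x t : ℝ) :
    dx (schwarzFlow S) x t = dx (dx (dx S)) x t + 8 * S x t * dx S x t := by
  refine HasDerivAt.deriv (((hS.dx.dx.hx x t).add
    (((hS.hx x t).pow 2).const_mul 4)).congr_deriv ?_)
  simp; ring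

/-- The right-hand side of the 1st potential Kupershmidt equation is `-F_x + U_x F`. -/
lemma kup1_of_schwarz {U : ℝ → ℝ → ℝ} (hU : Smooth2 U)
    (h : ∀ x t, dt U x t = -dx (schwarzFlow (schwarz U)) x t
      + dx U x t * schwarzFlow (schwarz U) x t) : Kup1 U := by
  intro x t
  rw [h, dx_schwarzFlow (smooth2_schwarz hU), dx_dx_dx_schwarz hU]
  simp only [schwarzFlow]
  rw [dx_dx_schwarz hU, dx_schwarz hU]
  simp only [schwarz]
  ring

/-- If `U_x = -v_xx / v_x`, the 3rd potential Kupershmidt equation for `v` reads `v_t = v_x F`. -/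
lemma kup3_schwarz {v U : ℝ → ℝ → ℝ} (hv : Smooth2 v) (hU : Smooth2 U)
    (hvx : ∀ x t, 0 < dx v x t) (h2 : dx (dx v) = fun x t => -(dx U x t * dx v x t))
    (heq : Kup3 v) : dt v = fun x t => dx v x t * schwarzFlow (schwarz U) x t := by
  have h3 : dx (dx (dx v)) = fun x t => (-dx (dx U) x t + (dx U x t) ^ 2) * dx v x t := by
    rw [h2]
    funext x t
    refine HasDerivAt.deriv (((hU.dx.hx x t).mul (hv.dx.hx x t)).neg.congr_deriv ?_)
    rw [h2]; ring
  have h4 : dx (dx (dx (dx v))) = fun x t => (-dx (dx (dx U)) x t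
      + 3 * dx U x t * dx (dx U) x t - (dx U x t) ^ 3) * dx v x t := by
    rw [h3]
    funext x t
    refine HasDerivAt.deriv ((((hU.dx.dx.hx x t).neg.add
      ((hU.dx.hx x t).pow 2)).mul (hv.dx.hx x t)).congr_deriv ?_)
    rw [h2]; simp; ring
  have h5 : dx (dx (dx (dx (dx v)))) = fun x t => (-dx (dx (dx (dx U))) x t
      + 3 * (dx (dx U) x t) ^ 2 + 4 * dx U x t * dx (dx (dx U)) x t
      - 6 * (dx U x t) ^ 2 * dx (dx U) x t + (dx U x t) ^ 4) * dx v x t := by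
    rw [h4]
    funext x t
    refine HasDerivAt.deriv (((((hU.dx.dx.dx.hx x t).neg.add
      (((hU.dx.hx x t).const_mul 3).mul (hU.dx.dx.hx x t))).sub
      ((hU.dx.hx x t).pow 3)).mul (hv.dx.hx x t)).congr_deriv ?_)
    rw [h2]; simp; ring
  funext x t
  have hne := (hvx x t).ne'
  rw [heq x t, h5, h4, h3, h2]
  simp only [schwarzFlow]
  rw [dx_dx_schwarz hU]
  simp only [schwarz]
  field_simp
  ring

/-- Proposition 4 b): `U = ln√2 - ln(v_x)` and `Ū = U + 2 ln v` both solve the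
1st potential Kupershmidt equation. -/
theorem kup1_nonlocal_invariance
    (v : ℝ → ℝ → ℝ)
    (hv : ContDiff ℝ (⊤ : ℕ∞) (fun p : ℝ × ℝ => v p.1 p.2))
    (hpos : ∀ x t, 0 < v x t)
    (hvx : ∀ x t, 0 < dx v x t)
    (heq : Kup3 v) :
    Kup1 (fun x t => (1/2) * Real.log 2 - Real.log (dx v x t)) ∧
    Kup1 (fun x t => (1/2) * Real.log 2 - Real.log (dx v x t) + 2 * Real.log (v x t)) := by
  have hv : Smooth2 v := hv
  set U : ℝ → ℝ → ℝ := fun x t => (1/2) * Real.log 2 - Real.log (dx v x t) with hUdef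
  set W : ℝ → ℝ → ℝ :=
    fun x t => (1/2) * Real.log 2 - Real.log (dx v x t) + 2 * Real.log (v x t) with hWdef
  have hU : Smooth2 U :=
    contDiff_const.sub (ContDiff.log hv.dx fun p => (hvx p.1 p.2).ne')
  have hW : Smooth2 W :=
    ContDiff.add hU (contDiff_const.mul (ContDiff.log hv fun p => (hpos p.1 p.2).ne'))
  have hUx : ∀ x t, dx U x t = -(dx (dx v) x t / dx v x t) := fun x t =>
    HasDerivAt.deriv (((hv.dx.hx x t).log (hvx x t).ne').const_sub _)
  have hUt : ∀ x t, dt U x t = -(dt (dx v) x t / dx v x t) := fun x t =>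
    HasDerivAt.deriv (((hv.dx.ht x t).log (hvx x t).ne').const_sub _)
  have hWx : dx W = fun x t => dx U x t + 2 * (dx v x t / v x t) := by
    funext x t
    exact HasDerivAt.deriv ((hU.hx x t).add (((hv.hx x t).log (hpos x t).ne').const_mul 2))
  have hWt : ∀ x t, dt W x t = dt U x t + 2 * (dt v x t / v x t) := fun x t =>
    HasDerivAt.deriv ((hU.ht x t).add (((hv.ht x t).log (hpos x t).ne').const_mul 2))
  have h2 : dx (dx v) = fun x t => -(dx U x t * dx v x t) := by
    funext x t
    have hne := (hvx x t).ne'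
    rw [hUx]; field_simp
  have hvt := kup3_schwarz hv hU hvx h2 heq
  -- Dividing the `x`-derivative of `v_t = v_x F` by `v_x` gives the evolution of `U`.
  have hUev : ∀ x t, dt U x t = -dx (schwarzFlow (schwarz U)) x t
      + dx U x t * schwarzFlow (schwarz U) x t := by
    intro x t
    have hne := (hvx x t).ne'
    have hmix : dx (dt v) x t = dx (dx v) x t * schwarzFlow (schwarz U) x t
        + dx v x t * dx (schwarzFlow (schwarz U)) x t := by
      rw [hvt]
      exact HasDerivAt.deriv
        ((hv.dx.hx x t).mul ((smooth2_schwarzFlow (smooth2_schwarz hU)).hx x t))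
    rw [hUt, hv.dt_dx, hmix, h2]
    field_simp
    ring
  -- Möbius invariance of the Schwarzian, for the transform `v ↦ -1/v`.
  have hS : schwarz W = schwarz U := by
    funext x t
    have hne := (hpos x t).ne'
    have hWxx : dx (dx W) x t = dx (dx U) x t
        + 2 * ((dx (dx v) x t * v x t - dx v x t * dx v x t) / (v x t) ^ 2) := by
      rw [hWx]
      exact HasDerivAt.deriv ((hU.dx.hx x t).add
        (((hv.dx.hx x t).div (hv.hx x t) hne).const_mul 2))
    simp only [schwarz]
    rw [hWxx, hWx, h2]
    field_simp
    ring
  refine ⟨kup1_of_schwarz hU hUev, kup1_of_schwarz hW fun x t => ?_⟩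
  rw [hS, hWt, hUev, hvt, hWx]
  ring
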